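/- Define f(x) = (x+1) log₂(x+1) − x log₂ x for x > 0, with f(0) = 0, and let h₂ be the binary entropy function. Then: (a) f is strictly increasing on [0, ∞); and (b) for every real E > 0 there exist ε > 0 and α₀ ∈ (0, min(1/2, E)) such that f(E − α) − h₂(α) > ε for all α ∈ (0, α₀]. -/

import Mathlib

/-!
Up to the factor `1 / log 2`, `f x` is the increment `φ (x + 1) - φ x` of the strictly convex
function `φ t = t log t`, and increments of a strictly convex function are strictly increasing.
As `α → 0⁺` the gap `f (E - α) - h₂ α` tends to `f E > f 0 = 0`, so it eventually exceeds `f E / 2`.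
-/

noncomputable section

/-- `f(x) = (x+1) log₂ (x+1) − x log₂ x` (with the convention `0 · log₂ 0 = 0`,
so that `f 0 = 0`). -/
def fNG (x : ℝ) : ℝ := (x + 1) * Real.logb 2 (x + 1) - x * Real.logb 2 x

/-- Binary entropy function. -/
def binEnt (x : ℝ) : ℝ := -(x * Real.logb 2 x) - (1 - x) * Real.logb 2 (1 - x)

open Filter Set Topology

theorem strictMonoOn_add_sub_of_strictConvexOn {𝕜 : Type*} [Field 𝕜] [LinearOrder 𝕜]
    [IsStrictOrderedRing 𝕜] {s : Set 𝕜} {φ : 𝕜 → 𝕜} (hφ : StrictConvexOn 𝕜 s φ)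
    {h : 𝕜} (hh : 0 < h) :
    StrictMonoOn (fun x => φ (x + h) - φ x) {x ∈ s | x + h ∈ s} := by
  rintro x ⟨hx, hxh⟩ y ⟨hy, hyh⟩ hxy
  have hx_lt : x < x + h := lt_add_of_pos_right x hh
  have hy_lt : y < y + h := lt_add_of_pos_right y hh
  have hxyh : x < y + h := hxy.trans hy_lt
  have slope_lt : (φ (x + h) - φ x) / h < (φ (y + h) - φ y) / h :=
    calc (φ (x + h) - φ x) / h
        = (φ (x + h) - φ x) / (x + h - x) := by rw [add_sub_cancel_left]
      _ < (φ (y + h) - φ x) / (y + h - x) :=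
          hφ.secant_strict_mono hx hxh hyh hx_lt.ne' hxyh.ne' (by gcongr)
      _ = (φ x - φ (y + h)) / (x - (y + h)) := by
          rw [← neg_sub (φ x), ← neg_sub x, neg_div_neg_eq]
      _ < (φ y - φ (y + h)) / (y - (y + h)) :=
          hφ.secant_strict_mono hyh hx hy hxyh.ne hy_lt.ne hxy
      _ = (φ (y + h) - φ y) / h := by
          rw [← neg_sub (φ (y + h)), sub_add_cancel_left, neg_div_neg_eq]
  exact (div_lt_div_iff_of_pos_right hh).mp slope_lt

theorem fNG_eq_div_log_two (x : ℝ) :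
    fNG x = ((x + 1) * Real.log (x + 1) - x * Real.log x) / Real.log 2 := by
  unfold fNG Real.logb
  ring

theorem binEnt_eq_binEntropy_div_log_two (x : ℝ) :
    binEnt x = Real.binEntropy x / Real.log 2 := by
  simp only [binEnt, Real.logb, Real.binEntropy, Real.log_inv]
  ring

theorem fNG_zero : fNG 0 = 0 := by simp [fNG]

theorem binEnt_zero : binEnt 0 = 0 := by simp [binEnt]

theorem continuous_fNG : Continuous fNG := by
  rw [funext fNG_eq_div_log_two]
  exact ((Real.continuous_mul_log.comp (continuous_add_const 1)).sub
    Real.continuous_mul_log).div_const _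

theorem continuous_binEnt : Continuous binEnt := by
  rw [funext binEnt_eq_binEntropy_div_log_two]
  exact Real.binEntropy_continuous.div_const _

theorem strictMonoOn_fNG : StrictMonoOn fNG (Ici 0) := by
  intro x hx y hy hxy
  have add_one_mem {t : ℝ} (ht : t ∈ Ici 0) : t + 1 ∈ Ici 0 := add_nonneg ht zero_le_one
  rw [fNG_eq_div_log_two, fNG_eq_div_log_two, div_lt_div_iff_of_pos_right (Real.log_pos one_lt_two)]
  exact strictMonoOn_add_sub_of_strictConvexOn Real.strictConvexOn_mul_log one_pos
    ⟨hx, add_one_mem hx⟩ ⟨hy, add_one_mem hy⟩ hxy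

theorem fNG_pos {x : ℝ} (hx : 0 < x) : 0 < fNG x :=
  fNG_zero.symm.trans_lt (strictMonoOn_fNG self_mem_Ici hx.le hx)

theorem tendsto_fNG_sub_binEnt (E : ℝ) :
    Tendsto (fun α => fNG (E - α) - binEnt α) (𝓝 0) (𝓝 (fNG E)) := by
  have gap_continuous : Continuous fun α => fNG (E - α) - binEnt α :=
    (continuous_fNG.comp (continuous_sub_left E)).sub continuous_binEnt
  simpa only [sub_zero, binEnt_zero] using gap_continuous.tendsto 0

/-- `f` is strictly increasing on `[0, ∞)`, and for every `E > 0` there are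
`ε > 0` and `α₀ ∈ (0, min (1/2) E)` with `f (E − α) − h₂ α > ε` for all `α ∈ (0, α₀]`. -/
theorem fNG_strictMono_and_gap :
    StrictMonoOn fNG (Set.Ici 0) ∧
    ∀ E : ℝ, 0 < E → ∃ ε > 0, ∃ α₀ : ℝ, 0 < α₀ ∧ α₀ < min (1 / 2) E ∧
      ∀ α ∈ Set.Ioc 0 α₀, fNG (E - α) - binEnt α > ε := by
  refine ⟨strictMonoOn_fNG, fun E hE => ⟨fNG E / 2, half_pos (fNG_pos hE), ?_⟩⟩
  have gap_large : ∀ᶠ α in 𝓝[>] (0 : ℝ), fNG E / 2 < fNG (E - α) - binEnt α :=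
    ((tendsto_fNG_sub_binEnt E).eventually_const_lt
      (half_lt_self (fNG_pos hE))).filter_mono nhdsWithin_le_nhds
  have lt_bound : ∀ᶠ α in 𝓝[>] (0 : ℝ), α < min (1 / 2) E :=
    (eventually_lt_nhds (lt_min one_half_pos hE)).filter_mono nhdsWithin_le_nhds
  obtain ⟨α₀, hα₀, hsub⟩ := mem_nhdsGT_iff_exists_Ioc_subset.mp (lt_bound.and gap_large)
  exact ⟨α₀, hα₀, (hsub (right_mem_Ioc.mpr hα₀)).1, fun α hα => (hsub hα).2⟩

end
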